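/- Achievability part of Theorem 1 for B = K: for every K ≥ 2 there exists a prime power q₀ such that for all prime powers q ≥ q₀ there exist, on some finite probability space, random variables W_1,…,W_K, Z_Σ, Z_1,…,Z_K, {X_{k,i}}_{k,i∈{1,…,K}}, {Y_i}_{i∈{1,…,K}} satisfying all conditions of the cyclic hierarchical secure aggregation model with B = K (so B_k = U_i = {1,…,K}) and input length L = K−1, together with the source-key condition, relay security, and server security, in which for each user k exactly K−1 of the messages {X_{k,i}}_{i=1}^K take values in 𝔽_q and the remaining one is deterministic (a constant), each Y_i takes values in 𝔽_q, each Z_k takes values in 𝔽_q, and Z_Σ is uniform on 𝔽_q^{K−1}. Consequently, when B = K, the rate tuple (R_X, R_Y, R_Z, R_{Z_Σ}) = (1, 1/(K−1), 1/(K−1), 1) is achievable. -/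

import Mathlib

/-!
Write `K = n + 1` and `L = n`. Extend an input `w ∈ 𝔽_q^n` to `w̃ = (0, w) ∈ 𝔽_q^(n+1)`, extend the
source key `s ∈ 𝔽_q^n` to keys `Z_0, …, Z_n` by `Z_{j+1} = s_j` and `∑ Z_k = 0`, and fix distinct
`δ_0, …, δ_n ∈ 𝔽_q`, which is possible as soon as `q ≥ K`. The scheme is
`X_{k,i} = (w̃_{k,i} - w̃_{k,k}) + (δ_i - δ_k) Z_k` and `Y_i = ∑_k X_{k,i}`; thus `X_{k,k} = 0`.

* Recovery: since `∑ Z_k = 0`, one has `Y_i = S̃_i - T` with `S = ∑ W_k` and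
  `T = ∑_k (w̃_{k,k} + δ_k Z_k)`. As `S̃_0 = 0`, this gives `S_j = Y_{j+1} - Y_0`; hence `Y` carries
  the same information as the pair `(T, S)`.
* Relay security: relay `i` sees `n` nontrivial symbols, masked by nonzero multiples of the keys
  `Z_k`, `k ≠ i`, and any `n` of the `n + 1` keys are independent and uniform.
* Server security: `δ` is not constant, so `T` is masked by a nonzero functional of the source key
  and is independent of `(W_k)`. Hence
  `I(Y; W | S) = H(T, S) - H(S) + H(W) - H(T, W) = 0`.

Both independence claims hold because, for every value of the inputs, a translation of the uniform
source key removes the inputs from the observation (`indep_of_shift`). The entropy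
identities follow from invariance of entropy under injective relabelling (`ent_comp_injective`) and
additivity under independence (`ent_pair_of_indep`).
-/

open scoped BigOperators

noncomputable def pr {Ω : Type} [Fintype Ω] {α : Type} [DecidableEq α]
    (p : Ω → ℝ) (X : Ω → α) (a : α) : ℝ :=
  ∑ ω, if X ω = a then p ω else 0

noncomputable def ent {Ω : Type} [Fintype Ω] {α : Type} [Fintype α] [DecidableEq α]
    (q : ℕ) (p : Ω → ℝ) (X : Ω → α) : ℝ :=
  -∑ a, pr p X a * Real.logb q (pr p X a)

noncomputable def condEnt {Ω : Type} [Fintype Ω] {α β : Type}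
    [Fintype α] [DecidableEq α] [Fintype β] [DecidableEq β]
    (q : ℕ) (p : Ω → ℝ) (X : Ω → α) (Y : Ω → β) : ℝ :=
  ent q p (fun ω => (X ω, Y ω)) - ent q p Y

noncomputable def mutInfo {Ω : Type} [Fintype Ω] {α β : Type}
    [Fintype α] [DecidableEq α] [Fintype β] [DecidableEq β]
    (q : ℕ) (p : Ω → ℝ) (X : Ω → α) (Y : Ω → β) : ℝ :=
  ent q p X + ent q p Y - ent q p (fun ω => (X ω, Y ω))

noncomputable def condMutInfo {Ω : Type} [Fintype Ω] {α β γ : Type}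
    [Fintype α] [DecidableEq α] [Fintype β] [DecidableEq β] [Fintype γ] [DecidableEq γ]
    (q : ℕ) (p : Ω → ℝ) (X : Ω → α) (Y : Ω → β) (Z : Ω → γ) : ℝ :=
  condEnt q p X Z + condEnt q p Y Z - condEnt q p (fun ω => (X ω, Y ω)) Z

def IsPMF {Ω : Type} [Fintype Ω] (p : Ω → ℝ) : Prop :=
  (∀ ω, 0 ≤ p ω) ∧ ∑ ω, p ω = 1

def IndepRV {Ω : Type} [Fintype Ω] {α β : Type} [DecidableEq α] [DecidableEq β]
    (p : Ω → ℝ) (X : Ω → α) (Y : Ω → β) : Prop :=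
  ∀ a b, pr p (fun ω => (X ω, Y ω)) (a, b) = pr p X a * pr p Y b

/-- The set of `B` relays `{k, k+1, …, k+B−1}` (indices mod `K`) associated with user `k`. -/
def Bset (K B : ℕ) (k : Fin K) : Finset (Fin K) :=
  (Finset.range B).image fun j => ⟨((k : ℕ) + j) % K, Nat.mod_lt _ k.pos⟩

/-- The set of users associated with relay `i`. -/
def Uset (K B : ℕ) (i : Fin K) : Finset (Fin K) :=
  Finset.univ.filter fun k => i ∈ Bset K B k

/-- The cyclic hierarchical secure aggregation model with `K` users/relays, association
number `B`, input length `L`, inputs in `𝔽_q^L` (`F = 𝔽_q`), keys valued in `ζ`, user-to-relay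
messages valued in `χ`, relay-to-server messages valued in `υ`, and source key valued in `σ`,
including the source-key condition, relay security and server security. Entropies are in
`q`-ary units. -/
structure HSAModel (K B L : ℕ) (F : Type) [Field F] [Fintype F] [DecidableEq F]
    (ζ χ υ σ : Type) [Fintype ζ] [DecidableEq ζ] [Fintype χ] [DecidableEq χ]
    [Fintype υ] [DecidableEq υ] [Fintype σ] [DecidableEq σ] : Type 1 where
  Ω : Type
  [fintΩ : Fintype Ω]
  p : Ω → ℝ
  W : Fin K → Ω → (Fin L → F)
  Z : Fin K → Ω → ζ
  Xm : Fin K → Fin K → Ω → χ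
  Y : Fin K → Ω → υ
  Zsig : Ω → σ
  hp : IsPMF p
  -- the inputs are i.i.d. uniform on 𝔽_q^L
  hW : ∀ w : Fin K → Fin L → F,
    pr p (fun ω => fun k => W k ω) w = 1 / (Fintype.card F : ℝ) ^ (K * L)
  -- the inputs are independent of the keys
  hWZ : IndepRV p (fun ω => fun k => W k ω) (fun ω => fun k => Z k ω)
  -- user messages are functions of the user's input and key
  hX : ∀ k : Fin K, condEnt (Fintype.card F) p
    (fun ω => fun i : {i // i ∈ Bset K B k} => Xm k i.1 ω) (fun ω => (W k ω, Z k ω)) = 0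
  -- relay messages are functions of the received messages
  hY : ∀ i : Fin K, condEnt (Fintype.card F) p (Y i)
    (fun ω => fun k : {k // k ∈ Uset K B i} => Xm k.1 i ω) = 0
  -- the server recovers the sum of the inputs
  hRec : condEnt (Fintype.card F) p (fun ω => ∑ k, W k ω) (fun ω => fun i => Y i ω) = 0
  -- all individual keys are generated from the source key
  hZsig : condEnt (Fintype.card F) p (fun ω => fun k => Z k ω) Zsig = 0
  -- relay security
  hRelaySec : ∀ i : Fin K, mutInfo (Fintype.card F) p
    (fun ω => fun k : {k // k ∈ Uset K B i} => Xm k.1 i ω) (fun ω => fun k => W k ω) = 0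
  -- server security
  hServerSec : condMutInfo (Fintype.card F) p (fun ω => fun i => Y i ω)
    (fun ω => fun k => W k ω) (fun ω => ∑ k, W k ω) = 0

attribute [instance] HSAModel.fintΩ

/-! ### Entropy of finitely valued random variables -/

section Entropy

theorem pr_comp_injective {Ω : Type} [Fintype Ω] {α β : Type} [DecidableEq α] [DecidableEq β]
    (p : Ω → ℝ) (X : Ω → α) (g : α → β) (hg : Function.Injective g) (a : α) :
    pr p (fun ω => g (X ω)) (g a) = pr p X a := by
  simp only [pr, hg.eq_iff]

theorem IndepRV.symm {Ω : Type} [Fintype Ω] {α β : Type} [DecidableEq α] [DecidableEq β]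
    {p : Ω → ℝ} {X : Ω → α} {Y : Ω → β} (h : IndepRV p X Y) : IndepRV p Y X := by
  intro b a
  rw [mul_comm, ← h a b]
  exact (pr_comp_injective p (fun ω => (X ω, Y ω)) Prod.swap Prod.swap_injective (a, b))

variable {Ω : Type} [Fintype Ω] {α β γ : Type}
  [Fintype α] [DecidableEq α] [Fintype β] [DecidableEq β] [Fintype γ] [DecidableEq γ]

/-- Entropy is invariant under injective relabelling; values outside the range of `g` contribute
nothing, by the convention `0 * logb q 0 = 0`. -/
theorem ent_comp_injective (q : ℕ) (p : Ω → ℝ) (X : Ω → α) (g : α → β)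
    (hg : Function.Injective g) : ent q p (fun ω => g (X ω)) = ent q p X := by
  unfold ent
  congr 1
  symm
  refine Finset.sum_of_injOn g hg.injOn (by simp) ?_ ?_
  · intro b _ hb
    have h0 : pr p (fun ω => g (X ω)) b = 0 := by
      unfold pr
      refine Finset.sum_eq_zero fun ω _ => if_neg ?_
      rintro rfl
      exact hb ⟨X ω, by simp, rfl⟩
    simp [h0]
  · intro a _
    rw [pr_comp_injective p X g hg]

theorem condEnt_of_fun (q : ℕ) (p : Ω → ℝ) (X : Ω → α) (Y : Ω → β) (f : β → α)
    (h : ∀ ω, X ω = f (Y ω)) : condEnt q p X Y = 0 := by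
  have hX : (fun ω => (X ω, Y ω)) = fun ω => (fun b => (f b, b)) (Y ω) := by
    funext ω; simp [h]
  unfold condEnt
  rw [hX, ent_comp_injective q p Y (fun b => (f b, b)) fun a b hab => (Prod.ext_iff.1 hab).2,
    sub_self]

theorem sum_pr (p : Ω → ℝ) (X : Ω → α) : ∑ a, pr p X a = ∑ ω, p ω := by
  unfold pr
  rw [Finset.sum_comm]
  simp

theorem ent_pair_of_indep (q : ℕ) (p : Ω → ℝ) (hp : IsPMF p) (X : Ω → α) (Y : Ω → β)
    (h : IndepRV p X Y) : ent q p (fun ω => (X ω, Y ω)) = ent q p X + ent q p Y := by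
  have hlog : ∀ x y : ℝ, x * y * Real.logb q (x * y)
      = y * (x * Real.logb q x) + x * (y * Real.logb q y) := by
    intro x y
    by_cases hx : x = 0
    · simp [hx]
    by_cases hy : y = 0
    · simp [hy]
    rw [Real.logb_mul hx hy]; ring
  unfold ent
  rw [Fintype.sum_prod_type]
  simp only [h _ _, hlog, Finset.sum_add_distrib]
  simp only [← Finset.sum_mul, ← Finset.mul_sum, sum_pr, hp.2]
  ring

theorem mutInfo_of_indep (q : ℕ) (p : Ω → ℝ) (hp : IsPMF p) (X : Ω → α) (Y : Ω → β)
    (h : IndepRV p X Y) : mutInfo q p X Y = 0 := by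
  unfold mutInfo
  rw [ent_pair_of_indep q p hp X Y h, sub_self]

/-- If `S = f(W)` and `Y` is an injective function of `(T, S)` with `T` independent of `W` and of
`S`, then `Y` reveals nothing about `W` beyond `S`. -/
theorem condMutInfo_of_mask {τ : Type} [Fintype τ] [DecidableEq τ] (q : ℕ) (p : Ω → ℝ)
    (hp : IsPMF p) (Y : Ω → α) (W : Ω → β) (S : Ω → γ) (T : Ω → τ) (f : β → γ)
    (hS : ∀ ω, S ω = f (W ω)) (g : τ × γ → α) (hg : Function.Injective g)
    (hY : ∀ ω, Y ω = g (T ω, S ω)) (hTW : IndepRV p T W) (hTS : IndepRV p T S) :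
    condMutInfo q p Y W S = 0 := by
  have e1 : ent q p (fun ω => (Y ω, S ω)) = ent q p T + ent q p S := by
    rw [← ent_pair_of_indep q p hp T S hTS,
      ← ent_comp_injective q p (fun ω => (T ω, S ω)) (fun x => (g x, x.2))
        fun a b hab => hg (Prod.ext_iff.1 hab).1]
    simp only [hY]
  have e2 : ent q p (fun ω => (W ω, S ω)) = ent q p W := by
    rw [← ent_comp_injective q p W (fun x => (x, f x)) fun a b hab => (Prod.ext_iff.1 hab).1]
    simp only [hS]
  have e3 : ent q p (fun ω => ((Y ω, W ω), S ω)) = ent q p T + ent q p W := by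
    rw [← ent_pair_of_indep q p hp T W hTW,
      ← ent_comp_injective q p (fun ω => (T ω, W ω)) (fun x => ((g (x.1, f x.2), x.2), f x.2)) ?_]
    · simp only [hY, hS]
    · rintro ⟨a, b⟩ ⟨a', b'⟩ hab
      simp only [Prod.mk.injEq] at hab
      obtain ⟨⟨h1, rfl⟩, -⟩ := hab
      have := hg h1
      simp only [Prod.mk.injEq] at this
      rw [this.1]
  unfold condMutInfo condEnt
  rw [e1, e2, e3]
  ring

end Entropy

/-! ### The uniform distribution on a product -/

section Uniform

variable {A B : Type} [Fintype A] [Fintype B] [Nonempty A] [Nonempty B]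

/-- The uniform probability mass function on `A × B`. -/
noncomputable def unif (A B : Type) [Fintype A] [Fintype B] : A × B → ℝ :=
  fun _ => 1 / ((Fintype.card A : ℝ) * Fintype.card B)

theorem unif_isPMF : IsPMF (unif A B) := by
  refine ⟨fun ω => by unfold unif; positivity, ?_⟩
  have hA : (Fintype.card A : ℝ) ≠ 0 := by simp
  have hB : (Fintype.card B : ℝ) ≠ 0 := by simp
  simp only [unif, Finset.sum_const, Finset.card_univ, Fintype.card_prod, nsmul_eq_mul]
  push_cast
  field_simp

theorem pr_unif_fst [DecidableEq A] (a : A) :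
    pr (unif A B) (fun ω => ω.1) a = 1 / (Fintype.card A : ℝ) := by
  have hA : (Fintype.card A : ℝ) ≠ 0 := by simp
  have hB : (Fintype.card B : ℝ) ≠ 0 := by simp
  simp only [pr, unif, Fintype.sum_prod_type_right, Finset.sum_const, Finset.card_univ,
    nsmul_eq_mul, Finset.sum_ite_eq', Finset.mem_univ, if_true]
  field_simp

theorem pr_unif_snd [DecidableEq B] (b : B) :
    pr (unif A B) (fun ω => ω.2) b = 1 / (Fintype.card B : ℝ) := by
  have hA : (Fintype.card A : ℝ) ≠ 0 := by simp
  have hB : (Fintype.card B : ℝ) ≠ 0 := by simp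
  simp only [pr, unif, Fintype.sum_prod_type, Finset.sum_const, Finset.card_univ, nsmul_eq_mul,
    Finset.sum_ite_eq', Finset.mem_univ, if_true]
  field_simp

/-- If for every `a` a translation of `b` removes `a` from `h (a, b)`, then `h` is independent of
every function of `a`. -/
theorem indep_of_shift [AddGroup B] {α β : Type} [DecidableEq α] [DecidableEq β]
    (h : A × B → α) (f : A → β) (h0 : B → α) (t : A → B)
    (hh : ∀ a b, h (a, b + t a) = h0 b) :
    IndepRV (unif A B) h (fun ω => f ω.1) := by
  intro x y
  have hA : (Fintype.card A : ℝ) ≠ 0 := by simp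
  have hB : (Fintype.card B : ℝ) ≠ 0 := by simp
  set c : ℝ := 1 / ((Fintype.card A : ℝ) * Fintype.card B) with hc
  have key : ∀ a, ∀ φ : α → ℝ, ∑ b, φ (h (a, b)) = ∑ b, φ (h0 b) := by
    intro a φ
    rw [← Equiv.sum_comp (Equiv.addRight (t a)) (fun b => φ (h (a, b)))]
    simp [hh]
  set N : ℝ := ∑ b, if h0 b = x then 1 else 0 with hN
  set M : ℝ := ∑ a, if f a = y then 1 else 0 with hM
  have hcN : ∑ b, (if h0 b = x then c else 0) = c * N := by
    simp only [hN, Finset.mul_sum, mul_ite, mul_one, mul_zero]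
  have hcM : ∑ a, (if f a = y then c else 0) = c * M := by
    simp only [hM, Finset.mul_sum, mul_ite, mul_one, mul_zero]
  have e1 : pr (unif A B) (fun ω => (h ω, f ω.1)) (x, y) = c * N * M := by
    simp only [pr, unif, ← hc, Fintype.sum_prod_type]
    rw [hM, Finset.mul_sum]
    refine Finset.sum_congr rfl fun a _ => ?_
    rw [key a (fun z => if (z, f a) = (x, y) then c else 0), ← hcN]
    by_cases hy : f a = y <;> simp [hy]
  have e2 : pr (unif A B) h x = c * Fintype.card A * N := by
    simp only [pr, unif, ← hc, Fintype.sum_prod_type]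
    have : ∀ a, ∑ b, (if h (a, b) = x then c else 0) = c * N := fun a => by
      rw [key a (fun z => if z = x then c else 0), hcN]
    simp only [this, Finset.sum_const, Finset.card_univ, nsmul_eq_mul]
    ring
  have e3 : pr (unif A B) (fun ω => f ω.1) y = c * Fintype.card B * M := by
    simp only [pr, unif, ← hc, Fintype.sum_prod_type_right, hcM, Finset.sum_const,
      Finset.card_univ, nsmul_eq_mul]
    ring
  rw [e1, e2, e3, hc]
  field_simp

end Uniform

/-! ### The aggregation scheme -/

theorem Bset_self (K : ℕ) (k : Fin K) : Bset K K k = Finset.univ := by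
  refine Finset.eq_univ_iff_forall.2 fun i => ?_
  simp only [Bset, Finset.mem_image, Finset.mem_range]
  -- the offset from `k` to `i` is `i - k` modulo `K`
  refine ⟨(i + (K - k)) % K, Nat.mod_lt _ k.pos, Fin.ext ?_⟩
  have hk := k.2
  have hi := i.2
  simp only [Nat.add_mod_mod]
  rw [show (k : ℕ) + (i + (K - k)) = i + K by omega, Nat.add_mod_right, Nat.mod_eq_of_lt hi]

theorem mem_Uset_self (K : ℕ) (i k : Fin K) : k ∈ Uset K K i := by
  simp [Uset, Bset_self]

section Scheme

variable {F : Type} [Field F] {n : ℕ}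

/-- The extension `w̃ = (0, w)` of an input. -/
def ext0 (w : Fin n → F) : Fin (n + 1) → F := Fin.cons 0 w

/-- The individual keys: the source key, preceded by the entry making the total zero. -/
def keys (s : Fin n → F) : Fin (n + 1) → F := Fin.cons (-∑ j, s j) s

/-- The message `X_{k,i}` computed from the input `w` and the key `z` of user `k`. -/
def msg (δ : Fin (n + 1) → F) (k i : Fin (n + 1)) (w : Fin n → F) (z : F) : F :=
  (ext0 w i - ext0 w k) + (δ i - δ k) * z

/-- The masking symbol `T`, which is the common offset between the `Y_i` and the sum of inputs. -/
def mask (δ : Fin (n + 1) → F) (w : Fin (n + 1) → Fin n → F) (s : Fin n → F) : F :=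
  ∑ k, (ext0 (w k) k + δ k * keys s k)

theorem sum_keys (s : Fin n → F) : ∑ k, keys s k = 0 := by
  simp [keys, Fin.sum_univ_succ]

theorem keys_add (s t : Fin n → F) (k : Fin (n + 1)) :
    keys (s + t) k = keys s k + keys t k := by
  refine Fin.cases ?_ (fun j => ?_) k
  · simp [keys, Finset.sum_add_distrib]; ring
  · simp [keys]

/-- Every zero-sum family arises as a family of individual keys. -/
theorem keys_tail (z : Fin (n + 1) → F) (hz : ∑ k, z k = 0) : keys (Fin.tail z) = z := by
  rw [Fin.sum_univ_succ] at hz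
  funext k
  refine Fin.cases ?_ (fun j => ?_) k
  · simp only [keys, Fin.cons_zero, Fin.tail]
    linear_combination -hz
  · simp [keys, Fin.tail]

theorem ext0_sum (w : Fin (n + 1) → Fin n → F) (i : Fin (n + 1)) :
    ext0 (∑ k, w k) i = ∑ k, ext0 (w k) i := by
  refine Fin.cases ?_ (fun j => ?_) i
  · simp [ext0]
  · simp [ext0]

theorem sum_msg (δ : Fin (n + 1) → F) (w : Fin (n + 1) → Fin n → F) (s : Fin n → F)
    (i : Fin (n + 1)) :
    ∑ k, msg δ k i (w k) (keys s k) = ext0 (∑ k, w k) i - mask δ w s := by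
  simp only [msg, mask, sub_mul, Finset.sum_sub_distrib, Finset.sum_add_distrib, ← Finset.mul_sum,
    sum_keys, ext0_sum]
  ring

/-- The passage from `(T, S)` to `(Y_i)` is injective: `T = -Y_0` and `S_j = Y_{j+1} - Y_0`. -/
theorem aggregate_injective :
    Function.Injective fun (x : F × (Fin n → F)) (i : Fin (n + 1)) => ext0 x.2 i - x.1 := by
  rintro ⟨a, v⟩ ⟨b, w⟩ h
  have h0 : a = b := by simpa [ext0] using congrFun h 0
  subst h0
  refine Prod.ext rfl (funext fun j => ?_)
  simpa [ext0] using congrFun h j.succ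

/-- For every relay `i`, some source key makes all messages received by relay `i` vanish: the keys
`Z_k`, `k ≠ i`, may be prescribed freely, as `X_{i,i}` does not depend on `Z_i`. -/
theorem exists_relay_shift (δ : Fin (n + 1) → F) (hδ : Function.Injective δ) (i : Fin (n + 1))
    (w : Fin (n + 1) → Fin n → F) :
    ∃ t : Fin n → F, ∀ k, msg δ k i (w k) (keys t k) = 0 := by
  set z : Fin (n + 1) → F := fun k => -(ext0 (w k) i - ext0 (w k) k) / (δ i - δ k) with hz
  set z' : Fin (n + 1) → F := z - Pi.single i (∑ k, z k) with hz'
  refine ⟨Fin.tail z', fun k => ?_⟩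
  rw [keys_tail z' (by simp [hz'])]
  by_cases hk : k = i
  · subst hk; simp [msg]
  · have hne : δ i - δ k ≠ 0 := sub_ne_zero.2 fun h => hk (hδ h).symm
    simp only [msg, hz', hz, Pi.sub_apply, Pi.single_eq_of_ne hk, sub_zero]
    field_simp
    ring

/-- Some source key makes the masking symbol vanish, since `δ` is not constant. -/
theorem exists_mask_shift (δ : Fin (n + 1) → F) (hδ : Function.Injective δ) (hn : n ≠ 0)
    (w : Fin (n + 1) → Fin n → F) : ∃ t : Fin n → F, mask δ w t = 0 := by
  have hne : δ 0 - δ (Fin.last n) ≠ 0 := sub_ne_zero.2 fun h =>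
    hn (by simpa using (congrArg Fin.val (hδ h)).symm)
  set c : F := -(∑ k, ext0 (w k) k) / (δ 0 - δ (Fin.last n)) with hc
  set z : Fin (n + 1) → F := Pi.single 0 c - Pi.single (Fin.last n) c with hz
  refine ⟨Fin.tail z, ?_⟩
  have hsum : ∑ k, δ k * z k = (δ 0 - δ (Fin.last n)) * c := by
    simp [hz, mul_sub, sub_mul, Pi.single_apply]
  rw [mask, keys_tail z (by simp [hz]), Finset.sum_add_distrib, hsum, hc]
  field_simp
  ring

theorem msg_shift (δ : Fin (n + 1) → F) (k i : Fin (n + 1)) (w : Fin n → F) (s t : Fin n → F) :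
    msg δ k i w (keys (s + t) k) = (δ i - δ k) * keys s k + msg δ k i w (keys t k) := by
  rw [msg, msg, keys_add]; ring

theorem mask_shift (δ : Fin (n + 1) → F) (w : Fin (n + 1) → Fin n → F) (s t : Fin n → F) :
    mask δ w (s + t) = ∑ k, δ k * keys s k + mask δ w t := by
  rw [mask, mask, ← Finset.sum_add_distrib]
  refine Finset.sum_congr rfl fun k _ => ?_
  rw [keys_add]; ring

variable [Fintype F] [DecidableEq F]

theorem relay_indep (δ : Fin (n + 1) → F) (hδ : Function.Injective δ) (i : Fin (n + 1))
    (U : Finset (Fin (n + 1))) :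
    IndepRV (unif (Fin (n + 1) → Fin n → F) (Fin n → F))
      (fun ω => fun k : {k // k ∈ U} => msg δ k.1 i (ω.1 k.1) (keys ω.2 k.1)) (fun ω => ω.1) := by
  choose t ht using exists_relay_shift δ hδ i
  refine indep_of_shift _ (fun w => w) (fun s k => (δ i - δ k.1) * keys s k.1) t fun w s => ?_
  funext k
  simp only [msg_shift, ht, add_zero]

theorem mask_indep (δ : Fin (n + 1) → F) (hδ : Function.Injective δ) (hn : n ≠ 0)
    {β : Type} [DecidableEq β] (f : (Fin (n + 1) → Fin n → F) → β) :
    IndepRV (unif (Fin (n + 1) → Fin n → F) (Fin n → F))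
      (fun ω => mask δ ω.1 ω.2) (fun ω => f ω.1) := by
  choose t ht using exists_mask_shift δ hδ hn
  refine indep_of_shift _ f (fun s => ∑ k, δ k * keys s k) t fun w s => ?_
  simp only [mask_shift, ht, add_zero]

/-- The scheme with parameters `δ`, on the space of pairs (inputs, source key) with the uniform
distribution. -/
noncomputable def scheme (δ : Fin (n + 1) → F) (hδ : Function.Injective δ) (hn : n ≠ 0) :
    HSAModel (n + 1) (n + 1) n F F F F (Fin n → F) where
  Ω := (Fin (n + 1) → Fin n → F) × (Fin n → F)
  p := unif _ _
  W k ω := ω.1 k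
  Z k ω := keys ω.2 k
  Xm k i ω := msg δ k i (ω.1 k) (keys ω.2 k)
  Y i ω := ∑ k, msg δ k i (ω.1 k) (keys ω.2 k)
  Zsig ω := ω.2
  hp := unif_isPMF
  hW w := by
    rw [pr_unif_fst]
    simp [← pow_mul, mul_comm]
  hWZ := by
    refine IndepRV.symm (indep_of_shift _ (fun w => w) (fun s k => keys s k) (fun _ => 0) ?_)
    intro w s
    simp
  hX k := condEnt_of_fun _ _ _ _ (fun x i => msg δ k i.1 x.1 x.2) fun _ => rfl
  hY i := condEnt_of_fun _ _ _ _ (fun x => ∑ k, x ⟨k, mem_Uset_self _ i k⟩) fun _ => rfl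
  hRec := by
    refine condEnt_of_fun _ _ _ _ (fun y j => y j.succ - y 0) fun ω => ?_
    funext j
    simp only [sum_msg]
    simp [ext0]
  hZsig := condEnt_of_fun _ _ _ _ (fun s k => keys s k) fun _ => rfl
  hRelaySec i := mutInfo_of_indep _ _ unif_isPMF _ _ (relay_indep δ hδ i _)
  hServerSec :=
    condMutInfo_of_mask _ _ unif_isPMF _ _ _ (fun ω => mask δ ω.1 ω.2) (fun w => ∑ k, w k)
      (fun _ => rfl) _ aggregate_injective (fun ω => funext fun i => sum_msg δ ω.1 ω.2 i)
      (mask_indep δ hδ hn fun w => w) (mask_indep δ hδ hn fun w => ∑ k, w k)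

end Scheme

/-- achievability part of Theorem 1 for `B = K`: for every `K ≥ 2` there is
a prime power `q₀` such that over any finite field `𝔽_q` with `q ≥ q₀` there is an instance
of the cyclic HSA model with `B = K` (so `B_k = U_i = {1,…,K}`) and input length `L = K−1`,
source-key condition, relay security and server security, in which each `Y_i` and each `Z_k`
is a single `𝔽_q` symbol, the source key `Z_Σ` is uniform on `𝔽_q^{K−1}`, and for each user
`k` exactly `K−1` of the messages `{X_{k,i}}_i` carry an `𝔽_q` symbol while the remaining one
is deterministic (constant); hence when `B = K` the rate tuple
`(R_X, R_Y, R_Z, R_{Z_Σ}) = (1, 1/(K−1), 1/(K−1), 1)` is achievable. -/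
theorem hsa_achievability_B_eq_K (K : ℕ) (hK : 2 ≤ K) :
    ∃ q₀ : ℕ, IsPrimePow q₀ ∧
      ∀ (F : Type) [Field F] [Fintype F] [DecidableEq F],
        q₀ ≤ Fintype.card F →
          ∃ M : HSAModel K K (K - 1) F F F F (Fin (K - 1) → F),
            -- the source key is uniform on 𝔽_q^{K−1}
            (∀ s : Fin (K - 1) → F,
              pr M.p M.Zsig s = 1 / (Fintype.card F : ℝ) ^ (K - 1)) ∧
            -- for each user one of the K messages is a constant (the other K−1 each carry
            -- one 𝔽_q symbol)
            (∀ k : Fin K, ∃ i : Fin K, ∃ c : F, ∀ ω, M.Xm k i ω = c) := by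
  obtain ⟨n, rfl⟩ : ∃ n, K = n + 1 := ⟨K - 1, by omega⟩
  obtain ⟨q₀, hq, hprime⟩ := Nat.exists_infinite_primes (n + 1)
  refine ⟨q₀, hprime.isPrimePow, ?_⟩
  intro F _ _ _ hF
  obtain ⟨δ⟩ : Nonempty (Fin (n + 1) ↪ F) :=
    Function.Embedding.nonempty_of_card_le (by simpa using hq.trans hF)
  refine ⟨scheme δ δ.injective (by omega), fun s => ?_, fun k => ⟨k, 0, fun ω => ?_⟩⟩
  · refine (pr_unif_snd (A := Fin (n + 1) → Fin n → F) (B := Fin n → F) s).trans ?_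
    simp
  · simp [scheme, msg]
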